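/- Averaged gentle measurement: let ρ_1,…,ρ_N be density matrices on ℂ^d and X_1,…,X_N Hermitian d×d matrices with 0 ≤ X_β ≤ 1 for each β, and suppose (1/N)·∑_{β=1}^N Re(trace(ρ_β X_β)) ≥ 1 − ε for some ε ≥ 0. Then (1/N)·∑_{β=1}^N ‖ρ_β − √X_β ρ_β √X_β‖₁ ≤ √(8ε). -/

import Mathlib

open scoped ComplexConjugate ComplexOrder MatrixOrder

/-- A density matrix: positive semidefinite with trace one. -/
def IsDensityMatrix {n : Type*} [Fintype n] (ρ : Matrix n n ℂ) : Prop :=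
  ρ.PosSemidef ∧ ρ.trace = 1

/-- The von Neumann entropy (in bits) of a (Hermitian) matrix:
`S(ρ) = −∑ᵢ λᵢ log₂ λᵢ` over the eigenvalues, with `0·log₂ 0 = 0`. -/
noncomputable def vnEntropy {n : Type*} [Fintype n] [DecidableEq n]
    (ρ : Matrix n n ℂ) : ℝ :=
  if h : ρ.IsHermitian then -∑ i, h.eigenvalues i * Real.logb 2 (h.eigenvalues i) else 0

/-- The trace norm of a Hermitian matrix: the sum of the absolute values of
its eigenvalues. -/
noncomputable def traceNorm {n : Type*} [Fintype n] [DecidableEq n]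
    (M : Matrix n n ℂ) : ℝ :=
  if h : M.IsHermitian then ∑ i, |h.eigenvalues i| else 0

/-!
Write `ρ = BᴴB` and `S = √X`, so that `ρ - SρS = AᴴA - CᴴC` with `A = B` and `C = BS`. In an
orthonormal eigenbasis `v` of this matrix the eigenvalues are
`‖A vᵢ‖² - ‖C vᵢ‖² = Re ⟪(A - C) vᵢ, (A + C) vᵢ⟫`, so Cauchy–Schwarz bounds the trace norm by the
product of the Hilbert–Schmidt norms of `A - C = B(1 - S)` and `A + C = B(1 + S)`. The operator
inequalities `(1 - S)² ≤ 1 - X` and `(1 + S)² ≤ 4` turn this into `2 √(tr ρ · tr (ρ(1 - X)))`, and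
a second Cauchy–Schwarz inequality averages it over the ensemble.
-/

section InnerProductSpace

open RCLike Matrix

variable {𝕜 : Type*} [RCLike 𝕜]

lemma abs_norm_sq_sub_norm_sq_le {E : Type*} [SeminormedAddCommGroup E] [InnerProductSpace 𝕜 E]
    (x y : E) : |‖x‖ ^ 2 - ‖y‖ ^ 2| ≤ ‖x - y‖ * ‖x + y‖ := by
  have re_inner_sub_add : re (inner 𝕜 (x - y) (x + y)) = ‖x‖ ^ 2 - ‖y‖ ^ 2 := by
    simp only [inner_sub_left, inner_add_right, map_sub, map_add, inner_self_eq_norm_sq,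
      inner_re_symm (𝕜 := 𝕜) y x]
    ring
  rw [← re_inner_sub_add]
  exact (abs_re_le_norm _).trans (norm_inner_le_norm _ _)

lemma re_inner_toEuclideanLin_conjTranspose_mul_self {m n : Type*} [Fintype m]
    [Fintype n] [DecidableEq n] (A : Matrix m n 𝕜) (x : EuclideanSpace 𝕜 n) :
    re (inner 𝕜 x ((Aᴴ * A).toEuclideanLin x)) = ‖A.toEuclideanLin x‖ ^ 2 := by
  classical
  rw [toLpLin_mul (q := 2), toEuclideanLin_conjTranspose_eq_adjoint,
    LinearMap.comp_apply, LinearMap.adjoint_inner_right, inner_self_eq_norm_sq]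

lemma sum_norm_sq_toEuclideanLin_apply {m n ι : Type*} [Fintype m] [Fintype n]
    [DecidableEq n] [Fintype ι] (A : Matrix m n 𝕜)
    (b : OrthonormalBasis ι 𝕜 (EuclideanSpace 𝕜 n)) :
    ∑ i, ‖A.toEuclideanLin (b i)‖ ^ 2 = re (Aᴴ * A).trace := by
  have trace_eq : (Aᴴ * A).trace = (Aᴴ * A).toEuclideanLin.trace 𝕜 _ :=
    (trace_toLin_eq _ (PiLp.basisFun 2 𝕜 n)).symm
  rw [trace_eq, LinearMap.trace_eq_sum_inner _ b, map_sum]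
  simp only [re_inner_toEuclideanLin_conjTranspose_mul_self]

lemma trace_mul_le_trace_mul_of_nonneg_left {n : Type*} [Fintype n] {A X Y : Matrix n n 𝕜}
    (hXY : X ≤ Y) (hA : 0 ≤ A) : (A * X).trace ≤ (A * Y).trace := by
  classical
  obtain ⟨B, rfl⟩ := CStarAlgebra.nonneg_iff_eq_star_mul_self.mp hA
  rw [Matrix.mul_assoc, Matrix.mul_assoc, trace_mul_comm, trace_mul_comm (star B) (B * Y),
    ← sub_nonneg, ← trace_sub]
  exact (sub_nonneg.mpr (star_right_conjugate_le_conjugate hXY B)).posSemidef.trace_nonneg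

end InnerProductSpace

section CStarAlgebra

variable {A : Type*} [CStarAlgebra A] [PartialOrder A] [StarOrderedRing A] {a : A}

lemma cfc_sqrt_le_one (ha : a ≤ 1) : CFC.sqrt a ≤ 1 := by
  simpa only [CFC.sqrt_one] using CFC.sqrt_le_sqrt a 1 ha

lemma le_cfc_sqrt_self (ha₀ : 0 ≤ a) (ha₁ : a ≤ 1) : a ≤ CFC.sqrt a := by
  simpa only [CFC.sq_sqrt a, pow_one] using
    CStarAlgebra.pow_antitone (CFC.sqrt_nonneg a) (cfc_sqrt_le_one ha₁) one_le_two

lemma one_sub_cfc_sqrt_sq_le (ha₀ : 0 ≤ a) (ha₁ : a ≤ 1) : (1 - CFC.sqrt a) ^ 2 ≤ 1 - a := by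
  have expand : (1 - CFC.sqrt a) ^ 2 = 1 - a - 2 • (CFC.sqrt a - a) := by
    rw [(Commute.one_left _).sub_sq, CFC.sq_sqrt a]
    noncomm_ring
  rw [expand]
  exact sub_le_self _ (nsmul_nonneg (sub_nonneg.mpr (le_cfc_sqrt_self ha₀ ha₁)) 2)

lemma one_add_cfc_sqrt_sq_le (ha₀ : 0 ≤ a) (ha₁ : a ≤ 1) : (1 + CFC.sqrt a) ^ 2 ≤ 4 := by
  calc (1 + CFC.sqrt a) ^ 2 = 1 + 2 • CFC.sqrt a + a := by
        rw [(Commute.one_left _).add_sq, CFC.sq_sqrt a]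
        noncomm_ring
    _ ≤ 1 + 2 • 1 + 1 := by gcongr; exact cfc_sqrt_le_one ha₁
    _ = 4 := by norm_num

end CStarAlgebra

section TraceNorm

open Matrix

variable {n : Type*} [Fintype n] [DecidableEq n]

lemma traceNorm_conjTranspose_mul_self_sub_le {m : Type*} [Fintype m] (A C : Matrix m n ℂ) :
    traceNorm (Aᴴ * A - Cᴴ * C) ≤
      √((A - C)ᴴ * (A - C)).trace.re * √((A + C)ᴴ * (A + C)).trace.re := by
  have hM : (Aᴴ * A - Cᴴ * C).IsHermitian :=
    (isHermitian_conjTranspose_mul_self A).sub (isHermitian_conjTranspose_mul_self C)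
  let v := hM.eigenvectorBasis
  have eigenvalues_eq (i : n) :
      hM.eigenvalues i = ‖A.toEuclideanLin (v i)‖ ^ 2 - ‖C.toEuclideanLin (v i)‖ ^ 2 := by
    simp only [← re_inner_toEuclideanLin_conjTranspose_mul_self, ← map_sub, ← inner_sub_right,
      ← LinearMap.sub_apply]
    rw [hM.eigenvalues_eq, dotProduct_comm, EuclideanSpace.inner_eq_star_dotProduct, toLpLin_apply]
  calc traceNorm (Aᴴ * A - Cᴴ * C) = ∑ i, |hM.eigenvalues i| := dif_pos hM
    _ ≤ ∑ i, ‖(A - C).toEuclideanLin (v i)‖ * ‖(A + C).toEuclideanLin (v i)‖ := by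
        gcongr with i
        rw [eigenvalues_eq, map_sub, map_add]
        exact abs_norm_sq_sub_norm_sq_le (𝕜 := ℂ) _ _
    _ ≤ _ := Real.sum_mul_le_sqrt_mul_sqrt _ _ _
    _ = _ := by simp only [sum_norm_sq_toEuclideanLin_apply, RCLike.re_to_complex]

lemma traceNorm_sub_mul_mul_self_le {ρ S : Matrix n n ℂ} (hρ : 0 ≤ ρ) (hS : S.IsHermitian) :
    traceNorm (ρ - S * ρ * S) ≤
      √(ρ * (1 - S) ^ 2).trace.re * √(ρ * (1 + S) ^ 2).trace.re := by
  obtain ⟨B, rfl⟩ := CStarAlgebra.nonneg_iff_eq_star_mul_self.mp hρ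
  rw [star_eq_conjTranspose]
  have trace_gram {T : Matrix n n ℂ} (hT : T.IsHermitian) :
      ((B * T)ᴴ * (B * T)).trace = (Bᴴ * B * T ^ 2).trace := by
    rw [conjTranspose_mul, hT.eq, Matrix.mul_assoc, trace_mul_comm, sq]
    simp only [Matrix.mul_assoc]
  have sub_eq : Bᴴ * B - S * (Bᴴ * B) * S = Bᴴ * B - (B * S)ᴴ * (B * S) := by
    rw [conjTranspose_mul, hS.eq]
    simp only [Matrix.mul_assoc]
  rw [sub_eq, ← trace_gram (isHermitian_one.sub hS), ← trace_gram (isHermitian_one.add hS),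
    Matrix.mul_sub, Matrix.mul_add, Matrix.mul_one]
  exact traceNorm_conjTranspose_mul_self_sub_le B (B * S)

open scoped Matrix.Norms.L2Operator in
lemma traceNorm_sub_sqrt_mul_mul_sqrt_le {ρ X : Matrix n n ℂ}
    (hρ : 0 ≤ ρ) (hX₀ : 0 ≤ X) (hX₁ : X ≤ 1) :
    traceNorm (ρ - CFC.sqrt X * ρ * CFC.sqrt X) ≤
      2 * (√ρ.trace.re * √(ρ * (1 - X)).trace.re) := by
  have re_trace_sub : (ρ * (1 - CFC.sqrt X) ^ 2).trace.re ≤ (ρ * (1 - X)).trace.re :=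
    Complex.re_le_re (trace_mul_le_trace_mul_of_nonneg_left (one_sub_cfc_sqrt_sq_le hX₀ hX₁) hρ)
  have re_trace_add : (ρ * (1 + CFC.sqrt X) ^ 2).trace.re ≤ 2 ^ 2 * ρ.trace.re := by
    have mul_four : ρ * 4 = 4 • ρ := (nsmul_eq_mul' ρ 4).symm
    refine (Complex.re_le_re (trace_mul_le_trace_mul_of_nonneg_left
      (one_add_cfc_sqrt_sq_le hX₀ hX₁) hρ)).trans_eq ?_
    rw [mul_four, trace_smul, Complex.re_nsmul, nsmul_eq_mul]
    norm_num
  calc traceNorm (ρ - CFC.sqrt X * ρ * CFC.sqrt X)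
      ≤ √(ρ * (1 - CFC.sqrt X) ^ 2).trace.re * √(ρ * (1 + CFC.sqrt X) ^ 2).trace.re :=
        traceNorm_sub_mul_mul_self_le hρ (CFC.sqrt_nonneg X).posSemidef.isHermitian
    _ ≤ √(ρ * (1 - X)).trace.re * √(2 ^ 2 * ρ.trace.re) := by gcongr
    _ = 2 * (√ρ.trace.re * √(ρ * (1 - X)).trace.re) := by
        rw [Real.sqrt_mul (by positivity), Real.sqrt_sq zero_le_two]
        ring

lemma IsDensityMatrix.re_trace_mul_le_one {ρ X : Matrix n n ℂ} (hρ : IsDensityMatrix ρ)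
    (hX : X ≤ 1) : (ρ * X).trace.re ≤ 1 := by
  simpa only [Matrix.mul_one, hρ.2, Complex.one_re] using
    Complex.re_le_re (trace_mul_le_trace_mul_of_nonneg_left hX hρ.1.nonneg)

lemma IsDensityMatrix.traceNorm_sub_sqrt_mul_mul_sqrt_le {ρ X : Matrix n n ℂ}
    (hρ : IsDensityMatrix ρ) (hX₀ : 0 ≤ X) (hX₁ : X ≤ 1) :
    traceNorm (ρ - CFC.sqrt X * ρ * CFC.sqrt X) ≤ 2 * √(1 - (ρ * X).trace.re) := by
  simpa only [Matrix.mul_sub, Matrix.mul_one, trace_sub, hρ.2, Complex.sub_re, Complex.one_re,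
    Real.sqrt_one, one_mul] using
    _root_.traceNorm_sub_sqrt_mul_mul_sqrt_le hρ.1.nonneg hX₀ hX₁

end TraceNorm

lemma sum_mul_sqrt_le_sqrt_sum_mul_sqrt_sum {ι : Type*} (s : Finset ι) {w f : ι → ℝ}
    (hw : ∀ i, 0 ≤ w i) (hf : ∀ i, 0 ≤ f i) :
    ∑ i ∈ s, w i * √(f i) ≤ √(∑ i ∈ s, w i) * √(∑ i ∈ s, w i * f i) := by
  refine (Finset.sum_congr rfl fun i _ => ?_).trans_le
    (Real.sum_sqrt_mul_sqrt_le s hw fun i => mul_nonneg (hw i) (hf i))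
  rw [Real.sqrt_mul (hw i), ← mul_assoc, Real.mul_self_sqrt (hw i)]

-- Weights of total mass below one make the empty uniform ensemble (`0⁻¹ = 0`) a special case.
theorem gentle_measurement_averaged_general {n ι : Type*} [Fintype n] [DecidableEq n] [Fintype ι]
    {w : ι → ℝ} (hw₀ : ∀ i, 0 ≤ w i) (hw₁ : ∑ i, w i ≤ 1)
    {ρ : ι → Matrix n n ℂ} (hρ : ∀ i, IsDensityMatrix (ρ i))
    {X : ι → Matrix n n ℂ} (hX₀ : ∀ i, 0 ≤ X i) (hX₁ : ∀ i, X i ≤ 1)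
    {ε : ℝ} (h : 1 - ε ≤ ∑ i, w i * (ρ i * X i).trace.re) :
    ∑ i, w i * traceNorm (ρ i - CFC.sqrt (X i) * ρ i * CFC.sqrt (X i)) ≤ √(4 * ε) := by
  let δ (i : ι) : ℝ := 1 - (ρ i * X i).trace.re
  have δ_nonneg (i : ι) : 0 ≤ δ i := sub_nonneg.mpr ((hρ i).re_trace_mul_le_one (hX₁ i))
  have sum_mul_δ_le : ∑ i, w i * δ i ≤ ε := by
    simp only [δ, mul_sub, mul_one, Finset.sum_sub_distrib]
    linarith
  calc ∑ i, w i * traceNorm (ρ i - CFC.sqrt (X i) * ρ i * CFC.sqrt (X i))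
      ≤ ∑ i, w i * (2 * √(δ i)) := by
        gcongr with i
        exacts [hw₀ i, (hρ i).traceNorm_sub_sqrt_mul_mul_sqrt_le (hX₀ i) (hX₁ i)]
    _ = 2 * ∑ i, w i * √(δ i) := by simp only [Finset.mul_sum, mul_left_comm]
    _ ≤ 2 * (√(∑ i, w i) * √(∑ i, w i * δ i)) := by
        gcongr
        exact sum_mul_sqrt_le_sqrt_sum_mul_sqrt_sum _ hw₀ δ_nonneg
    _ ≤ 2 * (√1 * √ε) := by gcongr
    _ = √(2 ^ 2 * ε) := by
        rw [Real.sqrt_one, one_mul, Real.sqrt_mul (by positivity), Real.sqrt_sq zero_le_two]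
    _ = √(4 * ε) := by norm_num

/-- averaged gentle measurement. -/
theorem gentle_measurement_averaged {d N : ℕ}
    (ρ : Fin N → Matrix (Fin d) (Fin d) ℂ) (hρ : ∀ β, IsDensityMatrix (ρ β))
    (X : Fin N → Matrix (Fin d) (Fin d) ℂ)
    (hX : ∀ β, (X β).PosSemidef) (hX1 : ∀ β, (1 - X β).PosSemidef)
    (ε : ℝ) (hε : 0 ≤ ε)
    (h : 1 - ε ≤ (N : ℝ)⁻¹ * ∑ β, ((ρ β * X β).trace).re) :
    (N : ℝ)⁻¹ * ∑ β, traceNorm (ρ β - CFC.sqrt (X β) * ρ β * CFC.sqrt (X β)) ≤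
      Real.sqrt (8 * ε) := by
  have sum_weights_le : ∑ _β : Fin N, (N : ℝ)⁻¹ ≤ 1 := by simpa using mul_inv_le_one
  rw [Finset.mul_sum] at h ⊢
  exact (gentle_measurement_averaged_general (fun _ => by positivity) sum_weights_le hρ
    (fun β => (hX β).nonneg) hX1 h).trans (Real.sqrt_le_sqrt (by linarith))
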